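/- Let C be a regular Ord-category and R ↣ X×Y a relation with legs r₁, r₂. Then R^* := (r₁)_*∘(r₂)^* is the smallest ideal containing the opposite relation R°: one has R° ⊆ R^*, R^* ≅ I_X∘R°∘I_Y, and any ideal containing R° contains R^*. -/

import Mathlib

open CategoryTheory

universe w v u

/-- An `Ord`-enrichment of a category: a preorder on each hom-set,
preserved by composition on both sides. -/
class OrdEnrichment (C : Type u) [Category.{v} C] : Type (max u v) where
  ord : ∀ {X Y : C}, (X ⟶ Y) → (X ⟶ Y) → Prop
  ord_refl : ∀ {X Y : C} (f : X ⟶ Y), ord f f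
  ord_trans : ∀ {X Y : C} {f g h : X ⟶ Y}, ord f g → ord g h → ord f h
  precomp_ord : ∀ {X Y Z : C} (e : X ⟶ Y) {f g : Y ⟶ Z}, ord f g → ord (e ≫ f) (e ≫ g)
  postcomp_ord : ∀ {X Y Z : C} {f g : X ⟶ Y} (h : Y ⟶ Z), ord f g → ord (f ≫ h) (g ≫ h)

/-- The preorder on hom-sets of an `Ord`-category. -/
def homLe {C : Type u} [Category.{v} C] [OrdEnrichment C] {X Y : C} (f g : X ⟶ Y) : Prop :=
  OrdEnrichment.ord f g

infixl:50 " ≼ " => homLe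

section

variable {C : Type u} [Category.{v} C] [OrdEnrichment C]

/-- A full (ff-) morphism. -/
def IsFF {X Y : C} (m : X ⟶ Y) : Prop :=
  ∀ {A : C} (a a' : A ⟶ X), (a ≫ m) ≼ (a' ≫ m) → a ≼ a'

/-- An ff-monomorphism: a full monomorphism. -/
def IsFFMono {X Y : C} (m : X ⟶ Y) : Prop := IsFF m ∧ Mono m

/-- An so-morphism: a morphism left orthogonal to every ff-monomorphism. -/
def IsSO {A B : C} (e : A ⟶ B) : Prop :=
  ∀ {X Y : C} (m : X ⟶ Y), IsFFMono m → ∀ (u : A ⟶ X) (v : B ⟶ Y),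
    u ≫ m = e ≫ v → ∃ d : B ⟶ X, e ≫ d = u ∧ d ≫ m = v

/-- The (strict) comma object square for the ordered pair `(f, g)`. -/
structure IsCommaSq {X Y Z : C} (f : X ⟶ Y) (g : Z ⟶ Y) (P : C)
    (π₁ : P ⟶ X) (π₂ : P ⟶ Z) : Prop where
  le : (π₁ ≫ f) ≼ (π₂ ≫ g)
  lift : ∀ {A : C} (α : A ⟶ X) (β : A ⟶ Z), (α ≫ f) ≼ (β ≫ g) →
    ∃! h : A ⟶ P, h ≫ π₁ = α ∧ h ≫ π₂ = β
  lift_ord : ∀ {A : C} {h h' : A ⟶ P}, (h ≫ π₁) ≼ (h' ≫ π₁) → (h ≫ π₂) ≼ (h' ≫ π₂) → h ≼ h'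

/-- A 2-pullback square (pullback with the `Ord`-enriched universal property). -/
structure Is2Pullback {X Y Z : C} (f : X ⟶ Z) (g : Y ⟶ Z) (P : C)
    (p : P ⟶ X) (q : P ⟶ Y) : Prop where
  comm : p ≫ f = q ≫ g
  lift : ∀ {A : C} (a : A ⟶ X) (b : A ⟶ Y), a ≫ f = b ≫ g →
    ∃! h : A ⟶ P, h ≫ p = a ∧ h ≫ q = b
  lift_ord : ∀ {A : C} {h h' : A ⟶ P}, (h ≫ p) ≼ (h' ≫ p) → (h ≫ q) ≼ (h' ≫ q) → h ≼ h'

/-- A binary 2-product. -/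
structure Is2Product (X Y : C) (P : C) (p : P ⟶ X) (q : P ⟶ Y) : Prop where
  lift : ∀ {A : C} (a : A ⟶ X) (b : A ⟶ Y), ∃! h : A ⟶ P, h ≫ p = a ∧ h ≫ q = b
  lift_ord : ∀ {A : C} {h h' : A ⟶ P}, (h ≫ p) ≼ (h' ≫ p) → (h ≫ q) ≼ (h' ≫ q) → h ≼ h'

/-- A 2-equalizer. -/
structure Is2Equalizer {X Y : C} (f g : X ⟶ Y) (E : C) (i : E ⟶ X) : Prop where
  comm : i ≫ f = i ≫ g
  lift : ∀ {A : C} (a : A ⟶ X), a ≫ f = a ≫ g → ∃! h : A ⟶ E, h ≫ i = a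
  lift_ord : ∀ {A : C} {h h' : A ⟶ E}, (h ≫ i) ≼ (h' ≫ i) → h ≼ h'

/-- A bicoinserter of a parallel pair. -/
structure IsBicoinserter {X A E : C} (a b : X ⟶ A) (e : A ⟶ E) : Prop where
  le : (a ≫ e) ≼ (b ≫ e)
  desc : ∀ {F : C} (f : A ⟶ F), (a ≫ f) ≼ (b ≫ f) →
    ∃ t : E ⟶ F, (e ≫ t) ≼ f ∧ f ≼ (e ≫ t)
  desc_ord : ∀ {F : C} {f f' : A ⟶ F} {t t' : E ⟶ F},
    (e ≫ t) ≼ f → f ≼ (e ≫ t) → (e ≫ t') ≼ f' → f' ≼ (e ≫ t') → f ≼ f' → t ≼ t'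

/-- A relation from `X` to `Y` in an `Ord`-category: a jointly ff-monomorphic span. -/
structure RelStr (X Y : C) : Type (max u v) where
  obj : C
  p : obj ⟶ X
  q : obj ⟶ Y
  jointly_ff : ∀ {A : C} (a a' : A ⟶ obj), (a ≫ p) ≼ (a' ≫ p) → (a ≫ q) ≼ (a' ≫ q) → a ≼ a'
  jointly_mono : ∀ {A : C} (a a' : A ⟶ obj), a ≫ p = a' ≫ p → a ≫ q = a' ≫ q → a = a'

/-- `(x, y) ∈_A R`. -/
def RelStr.Mem {X Y : C} (R : RelStr X Y) {A : C} (x : A ⟶ X) (y : A ⟶ Y) : Prop :=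
  ∃ h : A ⟶ R.obj, h ≫ R.p = x ∧ h ≫ R.q = y

/-- `R ⊆ S`: `R` factors through `S` (over `X × Y`). -/
def RelStr.Sub {X Y : C} (R S : RelStr X Y) : Prop :=
  ∃ φ : R.obj ⟶ S.obj, φ ≫ S.p = R.p ∧ φ ≫ S.q = R.q

/-- `R ≅ S`: mutual factorisation. -/
def RelStr.Iso {X Y : C} (R S : RelStr X Y) : Prop := R.Sub S ∧ S.Sub R

/-- The opposite relation `R°`. -/
def RelStr.op {X Y : C} (R : RelStr X Y) : RelStr Y X where
  obj := R.obj
  p := R.q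
  q := R.p
  jointly_ff := fun a a' h1 h2 => R.jointly_ff a a' h2 h1
  jointly_mono := fun a a' h1 h2 => R.jointly_mono a a' h2 h1

/-- A relation is an (order) ideal when it is closed under lowering the first
coordinate and raising the second coordinate. -/
def IsIdealRel {X Y : C} (R : RelStr X Y) : Prop :=
  ∀ {A : C} (x x' : A ⟶ X) (y y' : A ⟶ Y), x' ≼ x → R.Mem x y → y ≼ y' → R.Mem x' y'

/-- The relation `f_♯` given by the span `(1_X, f)`. -/
def sharpRel {X Y : C} (f : X ⟶ Y) : RelStr X Y where
  obj := X
  p := 𝟙 X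
  q := f
  jointly_ff := fun a a' h1 _ => by simpa using h1
  jointly_mono := fun a a' h1 _ => by simpa using h1

/-- The relation `f°`, the opposite of `f_♯`. -/
def cosharpRel {X Y : C} (f : X ⟶ Y) : RelStr Y X := (sharpRel f).op

/-- `M` is the meet (intersection) `R ∧ S` of two relations. -/
def IsMeetRel {X Y : C} (R S M : RelStr X Y) : Prop :=
  M.Sub R ∧ M.Sub S ∧
    ∀ {A : C} (x : A ⟶ X) (y : A ⟶ Y), R.Mem x y → S.Mem x y → M.Mem x y

/-- `T` is the composite `S ∘ R` of the relations `R : X ↬ Y` and `S : Y ↬ Z`,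
obtained via the (so-morphism, ff-monomorphism) factorisation of the span
given by the 2-pullback over the middle object. -/
def IsCompositeRel {X Y Z : C} (R : RelStr X Y) (S : RelStr Y Z) (T : RelStr X Z) : Prop :=
  ∃ (P : C) (p₁ : P ⟶ R.obj) (p₂ : P ⟶ S.obj) (e : P ⟶ T.obj),
    Is2Pullback R.q S.p P p₁ p₂ ∧ IsSO e ∧ e ≫ T.p = p₁ ≫ R.p ∧ e ≫ T.q = p₂ ≫ S.q

/-- `R` is the ideal `f_* = f / 1_Y : X ↬ Y`. -/
def IsStarRel {X Y : C} (f : X ⟶ Y) (R : RelStr X Y) : Prop :=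
  IsCommaSq f (𝟙 Y) R.obj R.p R.q

/-- `R` is the ideal `f^* = 1_Y / f : Y ↬ X`. -/
def IsCostarRel {X Y : C} (f : X ⟶ Y) (R : RelStr Y X) : Prop :=
  IsCommaSq (𝟙 Y) f R.obj R.p R.q

/-- `R` is the identity ideal `I_X = 1_X / 1_X`. -/
def IsIdRel (X : C) (R : RelStr X X) : Prop :=
  IsCommaSq (𝟙 X) (𝟙 X) R.obj R.p R.q

/-- `S` is the 2-pullback of the relation `R ↣ X × Y` along `f × g`. -/
def IsRelPullback {X Y U V : C} (R : RelStr X Y) (f : U ⟶ X) (g : V ⟶ Y)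
    (S : RelStr U V) : Prop :=
  ∃ h : S.obj ⟶ R.obj, h ≫ R.p = S.p ≫ f ∧ h ≫ R.q = S.q ≫ g ∧
    ∀ {A : C} (a : A ⟶ U) (b : A ⟶ V) (c : A ⟶ R.obj),
      c ≫ R.p = a ≫ f → c ≫ R.q = b ≫ g →
      ∃ d : A ⟶ S.obj, d ≫ S.p = a ∧ d ≫ S.q = b ∧ d ≫ h = c

/-- A binary 2-coproduct. -/
structure Is2Coproduct (X Y : C) (P : C) (i : X ⟶ P) (j : Y ⟶ P) : Prop where
  desc : ∀ {A : C} (a : X ⟶ A) (b : Y ⟶ A), ∃! h : P ⟶ A, i ≫ h = a ∧ j ≫ h = b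
  desc_ord : ∀ {A : C} {h h' : P ⟶ A}, (i ≫ h) ≼ (i ≫ h') → (j ≫ h) ≼ (j ≫ h') → h ≼ h'

/-- A ternary 2-coproduct. -/
structure Is3Coproduct (X Y Z : C) (P : C) (i : X ⟶ P) (j : Y ⟶ P) (k : Z ⟶ P) : Prop where
  desc : ∀ {A : C} (a : X ⟶ A) (b : Y ⟶ A) (c : Z ⟶ A),
    ∃! h : P ⟶ A, i ≫ h = a ∧ j ≫ h = b ∧ k ≫ h = c
  desc_ord : ∀ {A : C} {h h' : P ⟶ A},
    (i ≫ h) ≼ (i ≫ h') → (j ≫ h) ≼ (j ≫ h') → (k ≫ h) ≼ (k ≫ h') → h ≼ h'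

/-- Reflexivity of a relation on `X`: the diagonal factors through it. -/
def ReflexiveRel {X : C} (R : RelStr X X) : Prop := R.Mem (𝟙 X) (𝟙 X)

/-- Transitivity of a relation on `X`: `R ∘ R ⊆ R`. -/
def TransitiveRel {X : C} (R : RelStr X X) : Prop :=
  ∀ T : RelStr X X, IsCompositeRel R R T → T.Sub R

/-- A congruence: a reflexive and transitive ideal. -/
def IsCongruence {X : C} (R : RelStr X X) : Prop :=
  IsIdealRel R ∧ ReflexiveRel R ∧ TransitiveRel R

/-- An effective congruence: `R ≅ f^* ∘ f_*` for some morphism `f`. -/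
def EffectiveCongruence {X : C} (R : RelStr X X) : Prop :=
  ∃ (Y : C) (f : X ⟶ Y) (Fstar : RelStr X Y) (Fco : RelStr Y X) (T : RelStr X X),
    IsStarRel f Fstar ∧ IsCostarRel f Fco ∧ IsCompositeRel Fstar Fco T ∧ R.Iso T

/-- The `Ord`-enriched difunctionality property of a relation. -/
def OrdDifunctional {X Y : C} (D : RelStr X Y) : Prop :=
  ∀ {A : C} (x u u' : A ⟶ X) (y y' v : A ⟶ Y),
    D.Mem x y → y ≼ y' → D.Mem u y' → u ≼ u' → D.Mem u' v → D.Mem x v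

end

/-- A regular `Ord`-category: finite weighted limits, an
(so-morphism, ff-monomorphism) factorisation system, so-morphisms stable under
2-pullbacks, and every so-morphism the bicoinserter of its comma object projections. -/
structure IsRegularOrd (C : Type u) [Category.{v} C] [OrdEnrichment C] : Prop where
  hasTerminal : ∃ T : C, ∀ A : C, ∃ f : A ⟶ T, ∀ g : A ⟶ T, g = f
  has2Products : ∀ X Y : C, ∃ (P : C) (p : P ⟶ X) (q : P ⟶ Y), Is2Product X Y P p q
  has2Equalizers : ∀ {X Y : C} (f g : X ⟶ Y), ∃ (E : C) (i : E ⟶ X), Is2Equalizer f g E i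
  has2Pullbacks : ∀ {X Y Z : C} (f : X ⟶ Z) (g : Y ⟶ Z),
    ∃ (P : C) (p : P ⟶ X) (q : P ⟶ Y), Is2Pullback f g P p q
  hasCommaObjects : ∀ {X Y Z : C} (f : X ⟶ Y) (g : Z ⟶ Y),
    ∃ (P : C) (p : P ⟶ X) (q : P ⟶ Z), IsCommaSq f g P p q
  fact : ∀ {X Y : C} (f : X ⟶ Y), ∃ (I : C) (e : X ⟶ I) (m : I ⟶ Y),
    IsSO e ∧ IsFFMono m ∧ e ≫ m = f
  so_pullback_stable : ∀ {X Y Z P : C} (f : X ⟶ Z) (g : Y ⟶ Z) (p : P ⟶ X) (q : P ⟶ Y),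
    Is2Pullback f g P p q → IsSO g → IsSO p
  so_bicoinserter : ∀ {A B P : C} (e : A ⟶ B), IsSO e →
    ∀ (π₁ π₂ : P ⟶ A), IsCommaSq e e P π₁ π₂ → IsBicoinserter π₁ π₂ e

/-- An `Ord`-Mal'tsev category: every ideal is `Ord`-difunctional. -/
def IsOrdMaltsev (C : Type u) [Category.{v} C] [OrdEnrichment C] : Prop :=
  ∀ (X Y : C) (D : RelStr X Y), IsIdealRel D → OrdDifunctional D

/-- An `Ord`-W-Mal'tsev object: every ideal is `Ord`-difunctional with respect to
generalised elements with domain `Y`. -/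
def IsOrdWMaltsevObj {C : Type u} [Category.{v} C] [OrdEnrichment C] (Y : C) : Prop :=
  ∀ (X Z : C) (R : RelStr X Z), IsIdealRel R →
    ∀ (x u u' : Y ⟶ X) (z z' v : Y ⟶ Z),
      R.Mem x z → z ≼ z' → R.Mem u z' → u ≼ u' → R.Mem u' v → R.Mem x v


section Helpers

variable {C : Type u} [Category.{v} C] [OrdEnrichment C]

theorem hle_trans {X Y : C} {f g h : X ⟶ Y} (h1 : f ≼ g) (h2 : g ≼ h) : f ≼ h :=
  OrdEnrichment.ord_trans h1 h2

theorem hle_refl {X Y : C} (f : X ⟶ Y) : f ≼ f := OrdEnrichment.ord_refl f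

theorem hle_pre {X Y Z : C} (e : X ⟶ Y) {f g : Y ⟶ Z} (h : f ≼ g) : (e ≫ f) ≼ (e ≫ g) :=
  OrdEnrichment.precomp_ord e h

theorem hle_post {X Y Z : C} {f g : X ⟶ Y} (h : Y ⟶ Z) (hh : f ≼ g) : (f ≫ h) ≼ (g ≫ h) :=
  OrdEnrichment.postcomp_ord h hh

/-- Membership descends along so-morphisms. -/
theorem mem_descend (hC : IsRegularOrd C) {X Y A B : C} (T : RelStr X Y) (e : B ⟶ A)
    (he : IsSO e) (x : A ⟶ X) (y : A ⟶ Y) (h : T.Mem (e ≫ x) (e ≫ y)) : T.Mem x y := by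
  obtain ⟨P, p, q, hP⟩ := hC.has2Products X Y
  obtain ⟨m, ⟨hm1, hm2⟩, -⟩ := hP.lift T.p T.q
  obtain ⟨n, ⟨hn1, hn2⟩, -⟩ := hP.lift x y
  obtain ⟨k, hk1, hk2⟩ := h
  have hff : IsFFMono m := by
    refine ⟨?_, ⟨?_⟩⟩
    · intro A a a' haa
      apply T.jointly_ff
      · have := hle_post p haa
        simpa [hm1] using this
      · have := hle_post q haa
        simpa [hm2] using this
    · intro A a a' haa
      apply T.jointly_mono
      · have := congrArg (· ≫ p) haa
        simpa [hm1] using this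
      · have := congrArg (· ≫ q) haa
        simpa [hm2] using this
  have hcomm : k ≫ m = e ≫ n := by
    obtain ⟨_, _, huniq⟩ := hP.lift (e ≫ x) (e ≫ y)
    rw [huniq (k ≫ m) (by simp [hm1, hm2, hk1, hk2]), huniq (e ≫ n) (by simp [hn1, hn2])]
  obtain ⟨d, -, hd⟩ := he m hff k n hcomm
  refine ⟨d, ?_, ?_⟩
  · rw [← hm1, ← Category.assoc, hd, hn1]
  · rw [← hm2, ← Category.assoc, hd, hn2]

theorem comp_intro {X Y Z A : C} {R : RelStr X Y} {S : RelStr Y Z} {T : RelStr X Z}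
    (hT : IsCompositeRel R S T) {x : A ⟶ X} {y : A ⟶ Y} {z : A ⟶ Z}
    (h1 : R.Mem x y) (h2 : S.Mem y z) : T.Mem x z := by
  obtain ⟨P, p₁, p₂, e, hP, -, e1, e2⟩ := hT
  obtain ⟨a, a1, a2⟩ := h1
  obtain ⟨b, b1, b2⟩ := h2
  obtain ⟨k, ⟨k1, k2⟩, -⟩ := hP.lift a b (by rw [a2, b1])
  refine ⟨k ≫ e, ?_, ?_⟩
  · rw [Category.assoc, e1, ← Category.assoc, k1, a1]
  · rw [Category.assoc, e2, ← Category.assoc, k2, b2]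

theorem comp_elim (hC : IsRegularOrd C) {X Y Z A : C} {R : RelStr X Y} {S : RelStr Y Z}
    {T : RelStr X Z} (hT : IsCompositeRel R S T) {x : A ⟶ X} {z : A ⟶ Z} (h : T.Mem x z) :
    ∃ (B : C) (c : B ⟶ A) (y : B ⟶ Y), IsSO c ∧ R.Mem (c ≫ x) y ∧ S.Mem y (c ≫ z) := by
  obtain ⟨P, p₁, p₂, e, hP, he, e1, e2⟩ := hT
  obtain ⟨h, h1, h2⟩ := h
  obtain ⟨B, c, d, hB⟩ := hC.has2Pullbacks h e
  refine ⟨B, c, d ≫ p₁ ≫ R.q, hC.so_pullback_stable _ _ _ _ hB he,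
    ⟨d ≫ p₁, ?_, by simp⟩, ⟨d ≫ p₂, ?_, ?_⟩⟩
  · rw [Category.assoc, ← e1, ← Category.assoc, ← hB.comm, Category.assoc, h1]
  · rw [Category.assoc, hP.comm]
  · rw [Category.assoc, ← e2, ← Category.assoc, ← hB.comm, Category.assoc, h2]

theorem comma_mem {X Y Z A : C} {f : X ⟶ Y} {g : Z ⟶ Y} {R : RelStr X Z}
    (hR : IsCommaSq f g R.obj R.p R.q) (x : A ⟶ X) (z : A ⟶ Z) :
    R.Mem x z ↔ (x ≫ f) ≼ (z ≫ g) := by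
  constructor
  · rintro ⟨h, rfl, rfl⟩
    simpa using hle_pre h hR.le
  · intro h
    obtain ⟨k, hk, -⟩ := hR.lift x z h
    exact ⟨k, hk⟩

theorem sub_of_mem {X Y : C} {R S : RelStr X Y}
    (h : ∀ {A : C} (x : A ⟶ X) (y : A ⟶ Y), R.Mem x y → S.Mem x y) : R.Sub S :=
  h R.p R.q ⟨𝟙 _, by simp, by simp⟩

end Helpers

/-- `R^* = (r₁)_* ∘ (r₂)^*` is the smallest ideal containing the opposite relation `R°`. -/
theorem statement6 {C : Type u} [Category.{v} C] [OrdEnrichment C] (hC : IsRegularOrd C)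
    {X Y : C} (R : RelStr X Y)
    (IX : RelStr X X) (hIX : IsIdRel X IX) (IY : RelStr Y Y) (hIY : IsIdRel Y IY)
    (R1star : RelStr R.obj X) (hR1star : IsStarRel R.p R1star)
    (R2co : RelStr Y R.obj) (hR2co : IsCostarRel R.q R2co)
    (Rupper : RelStr Y X) (hRupper : IsCompositeRel R2co R1star Rupper)
    (G1 : RelStr Y X) (hG1 : IsCompositeRel IY R.op G1)
    (G2 : RelStr Y X) (hG2 : IsCompositeRel G1 IX G2) :
    IsIdealRel Rupper ∧
    R.op.Sub Rupper ∧
    Rupper.Iso G2 ∧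
    (∀ J : RelStr Y X, IsIdealRel J → R.op.Sub J → Rupper.Sub J) := by
  have m1 : ∀ {A : C} (x : A ⟶ R.obj) (z : A ⟶ X), R1star.Mem x z ↔ (x ≫ R.p) ≼ z := by
    intro A x z
    simpa using comma_mem hR1star x z
  have m2 : ∀ {A : C} (x : A ⟶ Y) (z : A ⟶ R.obj), R2co.Mem x z ↔ x ≼ (z ≫ R.q) := by
    intro A x z
    simpa using comma_mem hR2co x z
  have mX : ∀ {A : C} (x z : A ⟶ X), IX.Mem x z ↔ x ≼ z := by
    intro A x z
    simpa using comma_mem hIX x z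
  have mY : ∀ {A : C} (x z : A ⟶ Y), IY.Mem x z ↔ x ≼ z := by
    intro A x z
    simpa using comma_mem hIY x z
  refine ⟨?_, ?_, ⟨?_, ?_⟩, ?_⟩
  · intro A x x' y y' hx h hy
    obtain ⟨B, c, r, hc, ha, hb⟩ := comp_elim hC hRupper h
    rw [m2] at ha
    rw [m1] at hb
    apply mem_descend hC _ c hc
    exact comp_intro hRupper ((m2 _ r).2 (hle_trans (hle_pre c hx) ha))
      ((m1 r _).2 (hle_trans hb (hle_pre c hy)))
  · apply sub_of_mem
    rintro A x y ⟨r, rfl, rfl⟩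
    exact comp_intro hRupper ((m2 _ r).2 (hle_refl _)) ((m1 r _).2 (hle_refl _))
  · apply sub_of_mem
    intro A x y h
    obtain ⟨B, c, r, hc, ha, hb⟩ := comp_elim hC hRupper h
    rw [m2] at ha
    rw [m1] at hb
    apply mem_descend hC _ c hc
    have hr : R.op.Mem (r ≫ R.q) (r ≫ R.p) := ⟨r, rfl, rfl⟩
    exact comp_intro hG2 (comp_intro hG1 ((mY _ _).2 ha) hr) ((mX _ _).2 hb)
  · apply sub_of_mem
    intro A x z h
    obtain ⟨B, c, w, hc, ha, hb⟩ := comp_elim hC hG2 h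
    obtain ⟨D, d, y, hd, ha1, ⟨r, hr1, hr2⟩⟩ := comp_elim hC hG1 ha
    rw [mX] at hb
    rw [mY] at ha1
    change D ⟶ R.obj at r
    change r ≫ R.q = y at hr1
    change r ≫ R.p = d ≫ w at hr2
    apply mem_descend hC _ c hc
    apply mem_descend hC _ d hd
    refine comp_intro hRupper ((m2 _ r).2 ?_) ((m1 r _).2 ?_)
    · rw [hr1]; exact ha1
    · rw [hr2]; exact hle_pre d hb
  · rintro J hJ ⟨φ, hφ1, hφ2⟩
    change R.obj ⟶ J.obj at φ
    change φ ≫ J.p = R.q at hφ1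
    change φ ≫ J.q = R.p at hφ2
    apply sub_of_mem
    intro A x y h
    obtain ⟨B, c, r, hc, ha, hb⟩ := comp_elim hC hRupper h
    rw [m2] at ha
    rw [m1] at hb
    apply mem_descend hC _ c hc
    refine hJ (r ≫ R.q) _ (r ≫ R.p) _ ha ⟨r ≫ φ, ?_, ?_⟩ hb
    · rw [Category.assoc, hφ1]
    · rw [Category.assoc, hφ2]
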